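/- arXiv:2210.00561 — 4 statements merged into one kernel-verified Lean document; each statement's English description precedes it below -/
import Mathlib

section
/- Let n ≥ 3 and k ≥ 3 be odd integers, and let −d be the squarefree part of 1 − 2k^n (so d > 0 and 1 − 2k^n = −d·s² for some positive integer s). Then n divides h(−d), the class number of the imaginary quadratic field ℚ(√(1 − 2k^n)). -/
open IntermediateField NumberField

/-- The quadratic field `ℚ(√D)`, realized inside `ℂ` by adjoining the principal
square root of `D`. -/
noncomputable def quadField (D : ℤ) : IntermediateField ℚ ℂ :=
  ℚ⟮(D : ℂ) ^ ((1 : ℂ) / 2)⟯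

/-- The class number of the quadratic field `ℚ(√D)`. -/
noncomputable def quadClassNumber (D : ℤ) : ℕ :=
  Nat.card (ClassGroup (𝓞 (quadField D)))


theorem aux_lift {R : Type*} [CommRing R] (T x z : R) (hx : x = 2 * T * z) (b : ℕ) (a : ℕ) :
    ∃ y : R, (1 + x) ^ (2 ^ a * b) = 1 + (2 ^ a * b : ℕ) * x + 2 ^ (a + 1) * T ^ 2 * y := by
  induction a with
  | zero =>
    suffices h : ∃ y : R, (1 + x) ^ b = 1 + b * x + 2 * T ^ 2 * y by simpa using h
    induction b with
    | zero => exact ⟨0, by simp⟩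
    | succ b ih =>
      obtain ⟨y, hy⟩ := ih
      refine ⟨y * (1 + x) + b * 2 * z ^ 2, ?_⟩
      rw [pow_succ, hy]; push_cast; rw [hx]; ring
  | succ a ih =>
    obtain ⟨y, hy⟩ := ih
    refine ⟨y + 2 ^ a * b ^ 2 * z ^ 2 + 2 ^ a * b * y * x + 2 ^ a * T ^ 2 * y ^ 2, ?_⟩
    have : 2 ^ (a + 1) * b = (2 ^ a * b) * 2 := by ring
    rw [this, pow_mul, hy]; push_cast; rw [hx]; ring

theorem re_two_pow_mul {D : ℤ} (m : ℕ) (x : ℤ√D) : ((2 : ℤ√D) ^ m * x).re = 2 ^ m * x.re := by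
  have : (2 : ℤ√D) ^ m = ((2 ^ m : ℤ) : ℤ√D) := by push_cast; rfl
  rw [this, Zsqrtd.re_smul]

theorem comb_even (d v T : ℤ) (hT : 2 ∣ T) (hT0 : 0 < T) (h : d * v ^ 2 = 2 * T + 1) (q : ℕ)
    (hq : q ≠ 0) :
    ((⟨1, v⟩ : ℤ√(-d)) * ⟨-T, v⟩ ^ (2 * q)).re ≠ 1 ∧
    ((⟨1, v⟩ : ℤ√(-d)) * ⟨-T, v⟩ ^ (2 * q)).re ≠ -1 := by
  obtain ⟨T', rfl⟩ := hT
  obtain ⟨a, b, hb, rfl⟩ := Nat.exists_eq_two_pow_mul_odd hq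
  obtain ⟨y, hy⟩ := aux_lift (R := ℤ√(-d)) ((2 * T' : ℤ) : ℤ√(-d))
    ((2 : ℤ) * ((2 * T' : ℤ) : ℤ√(-d)) * ⟨1 - T', v⟩) ⟨1 - T', v⟩ (by push_cast; rfl) b a
  have hth : (⟨-(2 * T'), v⟩ : ℤ√(-d)) ^ 2 =
      - (1 + ((2 : ℤ) * ((2 * T' : ℤ) : ℤ√(-d)) * ⟨1 - T', v⟩)) := by
    rw [pow_two]
    ext
    · simp; linear_combination -h
    · simp; ring
  set w := ((⟨1, v⟩ : ℤ√(-d)) * y).re with hw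
  have key : ((⟨1, v⟩ : ℤ√(-d)) * (1 + ((2 : ℤ) * ((2 * T' : ℤ) : ℤ√(-d)) * ⟨1 - T', v⟩)) ^ (2 ^ a * b)).re
      = 1 - 5 * (2 ^ a * b) * (2 * T') ^ 2 + 2 ^ (a + 1) * (2 * T') ^ 2 * w := by
    rw [hy]
    have e1 : ((2 ^ a * b : ℕ) : ℤ√(-d)) = ((2 ^ a * b : ℤ) : ℤ√(-d)) := by push_cast; rfl
    have e2 : (2 : ℤ√(-d)) ^ (a + 1) * ((2 * T' : ℤ) : ℤ√(-d)) ^ 2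
       = ((2 ^ (a + 1) * (2 * T') ^ 2 : ℤ) : ℤ√(-d)) := by push_cast; rfl
    have : (⟨1, v⟩ : ℤ√(-d)) * (1 + ((2 ^ a * b : ℕ) : ℤ√(-d)) * ((2 : ℤ) * ((2 * T' : ℤ) : ℤ√(-d)) * ⟨1 - T', v⟩) + 2 ^ (a + 1) * ((2 * T' : ℤ) : ℤ√(-d)) ^ 2 * y)
      = ⟨1, v⟩ + ((2 ^ a * b * (2 * (2 * T')) : ℤ) : ℤ√(-d)) * (⟨1, v⟩ * ⟨1 - T', v⟩) + ((2 ^ (a + 1) * (2 * T') ^ 2 : ℤ) : ℤ√(-d)) * (⟨1, v⟩ * y) := by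
      rw [e2, e1]; push_cast; ring
    rw [this]
    rw [Zsqrtd.re_add, Zsqrtd.re_add, Zsqrtd.re_smul, Zsqrtd.re_smul, ← hw, Zsqrtd.re_mul]
    simp only []
    linear_combination -(2 ^ a * b * (2 * (2 * T'))) * h
  rw [pow_mul, hth, neg_pow]
  obtain ⟨c, hc⟩ := hb
  have hT'0 : T' ≠ 0 := by omega
  have key2 : ((⟨1, v⟩ : ℤ√(-d)) * (1 + ((2 : ℤ) * ((2 * T' : ℤ) : ℤ√(-d)) * ⟨1 - T', v⟩)) ^ (2 ^ a * b)).re ≠ 1 ∧ ((⟨1, v⟩ : ℤ√(-d)) * (1 + ((2 : ℤ) * ((2 * T' : ℤ) : ℤ√(-d)) * ⟨1 - T', v⟩)) ^ (2 ^ a * b)).re ≠ -1 := by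
    rw [key]
    constructor
    · intro h1
      have : (2 ^ a * (2 * T') ^ 2) * (2 * w - 5 * b) = 0 := by linear_combination h1
      rcases mul_eq_zero.mp this with h2 | h2
      · have : (2 : ℤ) ^ a * (2 * T') ^ 2 ≠ 0 := by positivity
        exact this h2
      · subst hc; push_cast at h2; omega
    · intro h1
      have : 4 * (T' ^ 2 * (2 ^ (a+1) * w - 5 * (2 ^ a * b))) = -2 := by linear_combination h1
      omega
  rcases neg_one_pow_eq_or (ℤ√(-d)) (2 ^ a * b) with h1 | h1 <;> rw [h1]
  · simpa only [one_mul] using key2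
  · rw [neg_one_mul, mul_neg, Zsqrtd.re_neg]
    omega

theorem comb_odd (d v T : ℤ) (hT : 2 ∣ T) (hT0 : 0 < T) (h : d * v ^ 2 = 2 * T + 1) (q : ℕ) :
    ((⟨1, v⟩ : ℤ√(-d)) * ⟨-T, v⟩ ^ (2 * q + 1)).re ≠ (-1) ^ (q + 1) := by
  have key : ∃ y : ℤ√(-d), (⟨-T, v⟩ : ℤ√(-d)) ^ (2 * q) = (((-1) ^ q : ℤ) : ℤ√(-d)) + ((2 * T : ℤ) : ℤ√(-d)) * y := by
    obtain ⟨T', rfl⟩ := hT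
    have hth : (⟨-(2 * T'), v⟩ : ℤ√(-d)) ^ 2 =
      -1 + ((2 * (2 * T') : ℤ) : ℤ√(-d)) * ⟨-1 + T', -v⟩ := by
      rw [pow_two]
      ext
      · simp; linear_combination -h
      · simp; ring
    induction q with
    | zero => exact ⟨0, by simp⟩
    | succ q ih =>
      obtain ⟨y, hy⟩ := ih
      have : 2 * (q + 1) = 2 * q + 2 := by ring
      rw [this, pow_add, hth, hy]
      refine ⟨((-1) ^ q : ℤ) * ⟨-1 + T', -v⟩ - y + ((2 * (2 * T') : ℤ) : ℤ√(-d)) * ⟨-1 + T', -v⟩ * y, ?_⟩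
      push_cast; ring
  obtain ⟨y, hy⟩ := key
  rw [pow_succ, hy]
  have : (⟨1, v⟩ : ℤ√(-d)) * (((((-1) ^ q : ℤ) : ℤ√(-d)) + ((2 * T : ℤ) : ℤ√(-d)) * y) * ⟨-T, v⟩)
    = (((-1) ^ q : ℤ) : ℤ√(-d)) * (⟨1, v⟩ * ⟨-T, v⟩) + ((2 * T : ℤ) : ℤ√(-d)) * (⟨1, v⟩ * y * ⟨-T, v⟩) := by ring
  rw [this, Zsqrtd.re_add, Zsqrtd.re_smul, Zsqrtd.re_smul]
  generalize ((⟨1, v⟩ : ℤ√(-d)) * y * ⟨-T, v⟩).re = w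
  have e : ((⟨1, v⟩ : ℤ√(-d)) * ⟨-T, v⟩).re = -1 - 3 * T := by
    simp only [Zsqrtd.re_mul]; linear_combination -h
  rw [e, pow_succ]
  intro h1
  have h2 : T * (2 * w - 3 * (-1) ^ q) = 0 := by linear_combination h1
  rcases mul_eq_zero.mp h2 with h2 | h2
  · omega
  · rcases neg_one_pow_eq_or ℤ q with h3 | h3 <;> rw [h3] at h2 <;> omega

theorem sq_delta (d v T : ℤ) (h : d * v ^ 2 = 2 * T + 1) :
   (⟨1, v⟩ : ℤ√(-d)) ^ 2 = 2 * ⟨-T, v⟩ := by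
  rw [pow_two]
  ext
  · simp; linear_combination -h
  · simp; ring

theorem delta_pow_re (d v T : ℤ) (h : d * v ^ 2 = 2 * T + 1) (m : ℕ) :
   ((⟨1, v⟩ : ℤ√(-d)) ^ (2 * m + 1)).re = 2 ^ m * (⟨1, v⟩ * (⟨-T, v⟩ : ℤ√(-d)) ^ m).re := by
  rw [pow_succ, pow_mul, sq_delta d v T h, mul_pow, mul_assoc, re_two_pow_mul, mul_comm ((⟨-T, v⟩ : ℤ√(-d)) ^ m)]

/-- powers of `u + v √D`: parity structure -/
theorem pow_struct (D u v : ℤ) (m : ℕ) : u ∣ ((⟨u, v⟩ : ℤ√D) ^ (2 * m + 1)).re ∧ 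
    u ∣ ((⟨u, v⟩ : ℤ√D) ^ (2 * m)).im := by
  induction m with
  | zero => simp
  | succ m ih =>
    obtain ⟨⟨a, ha⟩, ⟨b, hb⟩⟩ := ih
    have h2 : u ∣ ((⟨u, v⟩ : ℤ√D) ^ (2 * (m + 1))).im := by
      rw [show 2 * (m + 1) = (2 * m + 1) + 1 by ring, pow_succ, Zsqrtd.im_mul, ha]
      exact ⟨a * v + ((⟨u, v⟩ : ℤ√D) ^ (2 * m + 1)).im, by ring⟩
    refine ⟨?_, h2⟩
    obtain ⟨c, hc⟩ := h2
    rw [pow_succ, Zsqrtd.re_mul, hc]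
    exact ⟨((⟨u, v⟩ : ℤ√D) ^ (2 * (m + 1))).re + D * c * v, by ring⟩

theorem pow_re_mod (D v : ℤ) (m : ℕ) (hp : (2 * m + 1).Prime) :
    ((2 * m + 1 : ℕ) : ℤ) ∣ ((⟨1, v⟩ : ℤ√D) ^ (2 * m + 1)).re - 1 := by
  obtain ⟨r, hr⟩ := exists_add_pow_prime_eq hp (1 : ℤ√D) ⟨0, v⟩
  have h1 : (1 : ℤ√D) + ⟨0, v⟩ = ⟨1, v⟩ := by ext <;> simp
  have h2 := (pow_struct D 0 v m).1
  rw [zero_dvd_iff] at h2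
  rw [h1] at hr
  rw [hr]
  have h3 : ((2 * m + 1 : ℕ) : ℤ√D) * 1 * ⟨0, v⟩ * r = (((2 * m + 1 : ℕ) : ℤ) : ℤ√D) * (1 * ⟨0, v⟩ * r) := by
    push_cast; ring
  rw [h3, Zsqrtd.re_add, Zsqrtd.re_add, h2, Zsqrtd.re_smul, one_pow, Zsqrtd.re_one]
  exact ⟨(1 * ⟨0, v⟩ * r : ℤ√D).re, by ring⟩

theorem comb (d v T : ℤ) (hT : 2 ∣ T) (hT0 : 0 < T) (h : d * v ^ 2 = 2 * T + 1) (m : ℕ)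
    (hm : m ≠ 0) (hp : (2 * m + 1).Prime) :
    ((⟨1, v⟩ : ℤ√(-d)) ^ (2 * m + 1)).re ≠ 2 ^ m ∧ ((⟨1, v⟩ : ℤ√(-d)) ^ (2 * m + 1)).re ≠ - 2 ^ m := by
  have hmod := pow_re_mod (-d) v m hp
  rw [delta_pow_re d v T h] at hmod ⊢
  suffices hh : ((⟨1, v⟩ : ℤ√(-d)) * ⟨-T, v⟩ ^ m).re ≠ 1 ∧ ((⟨1, v⟩ : ℤ√(-d)) * ⟨-T, v⟩ ^ m).re ≠ -1 by
    have h2 : (2 : ℤ) ^ m ≠ 0 := by positivity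
    refine ⟨fun h1 => hh.1 ?_, fun h1 => hh.2 ?_⟩
    · apply mul_left_cancel₀ h2; linarith
    · apply mul_left_cancel₀ h2; linarith
  rcases Nat.even_or_odd' m with ⟨q, rfl | rfl⟩
  · exact comb_even d v T hT hT0 h q (by omega)
  · have hodd := comb_odd d v T hT hT0 h q
    have hp' : Fact (2 * (2 * q + 1) + 1).Prime := ⟨hp⟩
    have hz := (ZMod.intCast_zmod_eq_zero_iff_dvd _ (2 * (2 * q + 1) + 1)).mpr hmod
    have h20 : (2 : ZMod (2 * (2 * q + 1) + 1)) ≠ 0 := by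
      intro h0
      have : ((2 : ℕ) : ZMod (2 * (2 * q + 1) + 1)) = 0 := by exact_mod_cast h0
      rw [ZMod.natCast_eq_zero_iff] at this
      have := Nat.le_of_dvd (by norm_num) this
      omega
    have h1 := ZMod.euler_criterion (2 * (2 * q + 1) + 1) h20
    have h2 := ZMod.exists_sq_eq_two_iff (p := 2 * (2 * q + 1) + 1) (by omega)
    rw [show (2 * (2 * q + 1) + 1) / 2 = 2 * q + 1 by omega] at h1
    generalize hE : ((⟨1, v⟩ : ℤ√(-d)) * ⟨-T, v⟩ ^ (2 * q + 1)).re = E at *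
    rcases Nat.even_or_odd q with hq | hq
    · rw [pow_succ, hq.neg_one_pow] at hodd
      refine ⟨?_, by simpa using hodd⟩
      rintro rfl
      push_cast at hz
      have h3 := h2.mp (h1.mpr (by linear_combination hz))
      obtain ⟨c, rfl⟩ := hq
      omega
    · rw [pow_succ, hq.neg_one_pow] at hodd
      refine ⟨by simpa using hodd, ?_⟩
      rintro rfl
      push_cast at hz
      have h3 := h1.mp (h2.mpr (by obtain ⟨c, rfl⟩ := hq; omega))
      rw [h3] at hz
      exact h20 (by linear_combination -hz)

theorem elem_false (d s N : ℤ) (hd : 0 < d) (h : 1 + d * s ^ 2 = 2 * N) (hN : Odd N) (hN1 : 1 < N)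
    (m : ℕ) (hm : m ≠ 0) (hp : (2 * m + 1).Prime) (δ : ℤ√(-d))
    (hδ : δ ^ (2 * m + 1) = 2 ^ m * ⟨1, s⟩) : False := by
  have hnorm : δ.norm ^ (2 * m + 1) = 2 ^ (2 * m + 1) * N := by
    have := congrArg Zsqrtd.normMonoidHom hδ
    rw [map_pow, map_mul, map_pow] at this
    have h1 : Zsqrtd.normMonoidHom (2 : ℤ√(-d)) = 4 := Zsqrtd.norm_intCast (d := -d) 2
    have h2 : Zsqrtd.normMonoidHom (⟨1, s⟩ : ℤ√(-d)) = 2 * N := by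
      change Zsqrtd.norm _ = _
      rw [Zsqrtd.norm_def]; simp only []; linear_combination h
    rw [h1, h2] at this
    change δ.norm ^ (2 * m + 1) = _ at this
    rw [this, show (4 : ℤ) = 2 ^ 2 by norm_num, ← pow_mul]; ring
  have h2dvd : (2 : ℤ) ∣ δ.norm := by
    have : (2 : ℤ) ∣ δ.norm ^ (2 * m + 1) := by
      rw [hnorm, pow_succ]; exact ⟨2 ^ (2 * m) * N, by ring⟩
    exact Int.prime_two.dvd_of_dvd_pow this
  obtain ⟨K, hK⟩ := h2dvd
  have hKN : K ^ (2 * m + 1) = N := by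
    rw [hK, mul_pow] at hnorm
    exact mul_left_cancel₀ (by positivity) hnorm
  have hK0 : 0 ≤ δ.norm := Zsqrtd.norm_nonneg (by omega) δ
  have hKodd : Odd K := by
    rw [← hKN] at hN
    exact (Int.odd_pow' (by omega)).mp hN
  have hKnn : 0 ≤ K := by rw [hK] at hK0; omega
  have hK1 : K ≠ 1 := by rintro rfl; rw [one_pow] at hKN; omega
  obtain ⟨j, hj⟩ := hKodd
  obtain ⟨u, v⟩ := δ
  rw [Zsqrtd.norm_def] at hK
  simp only [] at hK
  have hK' : u ^ 2 + d * v ^ 2 = 2 * K := by linear_combination hK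
  have hdodd : Odd d := by
    by_contra h0
    rw [Int.not_odd_iff_even] at h0
    obtain ⟨c, rfl⟩ := h0
    have : 1 + 2 * (c * s ^ 2) = 2 * N := by linear_combination h
    omega
  have huodd : Odd u := by
    by_contra h0
    rw [Int.not_odd_iff_even] at h0
    obtain ⟨c, rfl⟩ := h0
    have h3 : Even (d * v ^ 2) := ⟨K - 2 * c ^ 2, by linear_combination hK'⟩
    rcases Int.even_mul.mp h3 with h4 | h4
    · exact (Int.not_even_iff_odd.mpr hdodd) h4
    · obtain ⟨b, rfl⟩ := (Int.even_pow' two_ne_zero).mp h4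
      have : 4 * (c ^ 2 + d * b ^ 2) = 2 * K := by linear_combination hK'
      omega
  have hre : ((⟨u, v⟩ : ℤ√(-d)) ^ (2 * m + 1)).re = 2 ^ m := by
    rw [hδ, re_two_pow_mul, mul_one]
  have hudvd : u ∣ 2 ^ m := hre ▸ (pow_struct (-d) u v m).1
  have hcop : IsCoprime u (2 ^ m) := by
    apply IsCoprime.pow_right
    obtain ⟨c, rfl⟩ := huodd
    exact ⟨1, -c, by ring⟩
  have hunit : IsUnit u := hcop.isUnit_of_dvd' dvd_rfl hudvd
  rcases Int.isUnit_iff.mp hunit with rfl | rfl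
  · exact (comb d v (K - 1) ⟨j, by omega⟩ (by omega) (by linear_combination hK') m hm hp).1 hre
  · have h5 : (⟨-1, v⟩ : ℤ√(-d)) = -⟨1, -v⟩ := by ext <;> simp
    rw [h5, Odd.neg_pow ⟨m, rfl⟩, Zsqrtd.re_neg] at hre
    exact (comb d (-v) (K - 1) ⟨j, by omega⟩ (by omega) (by linear_combination hK') m hm hp).2
      (by linarith)

theorem unit_pow_four (d : ℤ) (hd : 0 < d) (ε : ℤ√(-d)) (h : IsUnit ε) : ε ^ 4 = 1 := by
  rw [← Zsqrtd.norm_eq_one_iff' (by omega), Zsqrtd.norm_def] at h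
  obtain ⟨a, b⟩ := ε
  simp only [] at h
  have hb : d * b ^ 2 = 1 - a ^ 2 := by linear_combination h
  have hb0 : 0 ≤ d * b ^ 2 := by positivity
  rcases eq_or_ne b 0 with rfl | hb1
  · have ha : a ^ 2 = 1 := by linarith
    rw [show 4 = 2 * 2 by norm_num, pow_mul]
    have : (⟨a, 0⟩ : ℤ√(-d)) ^ 2 = 1 := by
      rw [pow_two]; ext
      · simp; linarith
      · simp
    rw [this, one_pow]
  · have hb2 : 0 < b ^ 2 := by positivity
    have h1 : d * b ^ 2 ≤ 1 := by nlinarith [sq_nonneg a]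
    have hd1 : d = 1 := by nlinarith
    subst hd1
    have hb3 : b ^ 2 = 1 := by nlinarith
    have ha : a = 0 := by
      have : a ^ 2 = 0 := by linarith
      exact pow_eq_zero_iff two_ne_zero |>.mp this
    subst ha
    rw [show 4 = 2 * 2 by norm_num, pow_mul]
    have : (⟨0, b⟩ : ℤ√(-1)) ^ 2 = -1 := by
      rw [pow_two]; ext
      · simp; linarith
      · simp
    rw [this]; norm_num

theorem main_dedekind {R : Type*} [CommRing R] [IsDedekindDomain R] (d s : ℤ) (hd : 0 < d)
    (e : ℤ√(-d) ≃+* R) (n k : ℕ) (hn : 3 ≤ n) (hno : Odd n) (hk : 3 ≤ k) (hko : Odd k)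
    (h : 1 + d * s ^ 2 = 2 * (k : ℤ) ^ n) : n ∣ Nat.card (ClassGroup R) := by
  classical
  set N : ℤ := (k : ℤ) ^ n with hN
  have hNodd : Odd N := by
    have : Odd (k : ℤ) := by exact_mod_cast hko
    exact this.pow
  have hN1 : 1 < N := by
    have : 1 < (k : ℤ) := by omega
    exact one_lt_pow₀ this (by omega)
  set β : ℤ√(-d) := ⟨1 - N, s⟩ with hβ
  set β' : ℤ√(-d) := ⟨1 - N, -s⟩ with hβ'
  have hα : (⟨1, s⟩ : ℤ√(-d)) ^ 2 = 2 * β := by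
    rw [pow_two, hβ]; ext
    · simp; linear_combination -h
    · simp; ring
  have hsum : β + β' = ((2 * (1 - N) : ℤ) : ℤ√(-d)) := by
    rw [hβ, hβ']; ext
    · simp; ring
    · simp
  have hprod : β * β' = ((N ^ 2 : ℤ) : ℤ√(-d)) := by
    rw [hβ, hβ']; ext
    · rw [Zsqrtd.re_intCast, Zsqrtd.re_mul]; simp only []; linear_combination h
    · rw [Zsqrtd.im_intCast, Zsqrtd.im_mul]; simp only []; ring
  have hcopZ : IsCoprime (2 * (1 - N)) (N ^ 2) := by
    apply IsCoprime.pow_right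
    obtain ⟨c, hc⟩ := hNodd
    apply IsCoprime.mul_left
    · exact ⟨-c, 1, by rw [hc]; ring⟩
    · exact ⟨1, 1, by ring⟩
  have hcop : IsCoprime β β' := by
    obtain ⟨a, b, hab⟩ := hcopZ
    refine ⟨a + b * β', a, ?_⟩
    have := congrArg (Int.cast : ℤ → ℤ√(-d)) hab
    rw [Int.cast_add, Int.cast_mul a, Int.cast_mul b, ← hsum, ← hprod, Int.cast_one] at this
    linear_combination this
  have hβ0 : β ≠ 0 := by
    intro h0
    have := congrArg Zsqrtd.re h0
    simp [hβ] at this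
    omega
  have hI : IsCoprime (Ideal.span {e β}) (Ideal.span {e β'}) := by
    rw [Ideal.isCoprime_span_singleton_iff]
    exact hcop.map e.toRingHom
  have hIJ : Ideal.span {e β} * Ideal.span {e β'} = Ideal.span {((k : R) ^ 2)} ^ n := by
    rw [Ideal.span_singleton_mul_span_singleton, ← map_mul, hprod, Ideal.span_singleton_pow, map_intCast, hN]
    push_cast
    rw [← pow_mul, ← pow_mul, mul_comm]
  obtain ⟨B, hB⟩ := exists_eq_pow_of_mul_eq_pow_of_coprime hI hIJ
  have heβ0 : e β ≠ 0 := by simpa using hβ0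
  have hB0 : B ≠ 0 := by
    rintro rfl
    rw [zero_pow (by omega)] at hB
    exact heβ0 (Ideal.span_singleton_eq_bot.mp hB)
  have hBm : B ∈ nonZeroDivisors (Ideal R) := mem_nonZeroDivisors_of_ne_zero hB0
  have hord : orderOf (ClassGroup.mk0 ⟨B, hBm⟩) = n := by
    apply orderOf_eq_of_pow_and_pow_div_prime (by omega)
    · rw [← map_pow]
      change ClassGroup.mk0 ⟨B ^ n, _⟩ = 1
      rw [ClassGroup.mk0_eq_one_iff, ← hB]
      exact ⟨⟨e β, rfl⟩⟩
    · intro p hp hpn hone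
      rw [← map_pow] at hone
      change ClassGroup.mk0 ⟨B ^ (n / p), _⟩ = 1 at hone
      rw [ClassGroup.mk0_eq_one_iff] at hone
      obtain ⟨⟨g, hg⟩⟩ := hone
      obtain ⟨m, hm⟩ : Odd p := hno.of_dvd_nat hpn
      have hm0 : m ≠ 0 := by rintro rfl; simp at hm; exact hp.one_lt.ne' hm
      have hassoc : Associated (e β) (g ^ p) := by
        rw [← Ideal.span_singleton_eq_span_singleton, ← Ideal.span_singleton_pow]
        change _ = (Submodule.span R {g}) ^ p
        rw [← hg, ← pow_mul, Nat.div_mul_cancel hpn, hB]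
      have hassoc2 : Associated (e.symm g ^ p) β := by
        have := hassoc.symm.map e.symm
        simpa using this
      obtain ⟨ε, hε⟩ := hassoc2
      have hε4 := unit_pow_four d hd ε ε.isUnit
      have hεp : ((ε : ℤ√(-d)) ^ p) ^ p = ε := by
        rw [hm, ← pow_mul, show (2 * m + 1) * (2 * m + 1) = 4 * (m * m + m) + 1 by ring, pow_succ,
          pow_mul, hε4, one_pow, one_mul]
      obtain ⟨γ, hγ⟩ : ∃ γ, β = γ ^ p := ⟨e.symm g * ε ^ p, by rw [mul_pow, hεp, hε]⟩
      have hγ0 : e γ ≠ 0 := by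
        intro h0
        have : γ = 0 := by simpa using h0
        rw [this, zero_pow hp.ne_zero] at hγ
        exact hβ0 hγ
      have hdvd : e γ ^ m ∣ e ⟨1, s⟩ := by
        rw [← IsIntegrallyClosed.pow_dvd_pow_iff (n := 2) two_ne_zero, ← map_pow e ⟨1, s⟩, hα, hγ, map_mul,
          map_pow e γ p, hm]
        exact ⟨e 2 * e γ, by ring⟩
      obtain ⟨δ, hδ⟩ := hdvd
      have hδ2 : δ ^ 2 = e 2 * e γ := by
        have h1 : (e γ ^ m) ^ 2 * δ ^ 2 = (e γ ^ m) ^ 2 * (e 2 * e γ) := by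
          rw [← mul_pow, ← hδ, ← map_pow e ⟨1, s⟩, hα, hγ, map_mul, map_pow e γ p, hm]; ring
        exact mul_left_cancel₀ (pow_ne_zero _ (pow_ne_zero _ hγ0)) h1
      have hfin : δ ^ (2 * m + 1) = e 2 ^ m * e ⟨1, s⟩ := by
        rw [pow_succ, pow_mul, hδ2, hδ]; ring
      refine elem_false d s N hd h hNodd hN1 m hm0 (hm ▸ hp) (e.symm δ) ?_
      apply e.injective
      rw [map_pow, e.apply_symm_apply, hfin, map_mul, map_pow]
  rw [← hord]
  exact orderOf_dvd_natCard _

theorem sqrt_sq (D : ℤ) : ((D : ℂ) ^ ((1 : ℂ) / 2)) ^ 2 = (D : ℂ) := by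
  have := Complex.cpow_nat_inv_pow (D : ℂ) (n := 2) two_ne_zero
  simpa only [one_div, Nat.cast_ofNat] using this

theorem quad_isIntegral (D : ℤ) : IsIntegral ℚ ((D : ℂ) ^ ((1 : ℂ) / 2)) := by
  apply IsIntegral.of_pow (n := 2) (by norm_num)
  rw [sqrt_sq D]
  simpa using isIntegral_algebraMap (R := ℚ) (A := ℂ) (x := (D : ℚ))

theorem quad_mem (D : ℤ) (x : ℂ) (hx : x ∈ quadField D) :
    ∃ a b : ℚ, x = a + b * (D : ℂ) ^ ((1 : ℂ) / 2) := by
  have hx' : x ∈ (quadField D).toSubalgebra := hx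
  rw [quadField, IntermediateField.adjoin_simple_toSubalgebra_of_isAlgebraic
    (quad_isIntegral D).isAlgebraic] at hx'
  have h2 := sqrt_sq D
  induction hx' using Algebra.adjoin_induction with
  | mem y hy => 
    rw [Set.mem_singleton_iff] at hy
    exact ⟨0, 1, by rw [hy]; simp⟩
  | algebraMap r => exact ⟨r, 0, by simp⟩
  | add y z hy hz h1 h2 =>
    obtain ⟨a, b, rfl⟩ := h1 (by rw [quadField, ← IntermediateField.mem_toSubalgebra, IntermediateField.adjoin_simple_toSubalgebra_of_isAlgebraic (quad_isIntegral D).isAlgebraic]; exact hy)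
    obtain ⟨a', b', rfl⟩ := h2 (by rw [quadField, ← IntermediateField.mem_toSubalgebra, IntermediateField.adjoin_simple_toSubalgebra_of_isAlgebraic (quad_isIntegral D).isAlgebraic]; exact hz)
    exact ⟨a + a', b + b', by push_cast; ring⟩
  | mul y z hy hz h1 h3 =>
    obtain ⟨a, b, rfl⟩ := h1 (by rw [quadField, ← IntermediateField.mem_toSubalgebra, IntermediateField.adjoin_simple_toSubalgebra_of_isAlgebraic (quad_isIntegral D).isAlgebraic]; exact hy)
    obtain ⟨a', b', rfl⟩ := h3 (by rw [quadField, ← IntermediateField.mem_toSubalgebra, IntermediateField.adjoin_simple_toSubalgebra_of_isAlgebraic (quad_isIntegral D).isAlgebraic]; exact hz)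
    exact ⟨a * a' + b * b' * D, a * b' + b * a', by push_cast; linear_combination (b * b' : ℂ) * h2⟩

theorem rat_int (q : ℚ) (h : IsIntegral ℤ (q : ℂ)) : ∃ z : ℤ, q = z := by
  have h1 : IsIntegral ℤ q := by
    have : IsIntegral ℤ (algebraMap ℚ ℂ q) := by simpa using h
    exact (isIntegral_algebraMap_iff (algebraMap ℚ ℂ).injective).mp this
  obtain ⟨z, hz⟩ := IsIntegrallyClosed.isIntegral_iff.mp h1
  exact ⟨z, by simpa using hz.symm⟩

theorem int_form (d : ℤ) (hd : 0 < d) (hsf : Squarefree d) (hd4 : d % 4 = 1) (w : ℂ)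
    (hw : w ^ 2 = -(d : ℂ)) (a b : ℚ) (h : IsIntegral ℤ ((a : ℂ) + b * w)) :
    ∃ x y : ℤ, a = x ∧ b = y := by
  have hdR : (0 : ℝ) < d := by exact_mod_cast hd
  have hconj : (starRingEnd ℂ) w = -w := by
    have h1 : ((starRingEnd ℂ) w) ^ 2 = w ^ 2 := by
      rw [← map_pow, hw]; simp
    rcases sq_eq_sq_iff_eq_or_eq_neg.mp h1 with h2 | h2
    · exfalso
      obtain ⟨r, hr⟩ := Complex.conj_eq_iff_real.mp h2
      rw [hr] at hw
      have : r ^ 2 = -(d : ℝ) := by exact_mod_cast hw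
      nlinarith [sq_nonneg r]
    · exact h2
  have hc : IsIntegral ℤ ((a : ℂ) - b * w) := by
    have := h.map (starRingEnd ℂ).toIntAlgHom
    have e : (starRingEnd ℂ).toIntAlgHom ((a : ℂ) + b * w) = a - b * w := by
      change (starRingEnd ℂ) _ = _
      rw [map_add, map_mul, hconj]; simp; ring
    rwa [e] at this
  obtain ⟨A, hA⟩ := rat_int (2 * a) (by
    have e : ((2 * a : ℚ) : ℂ) = (a + b * w) + (a - b * w) := by push_cast; ring
    rw [e]; exact h.add hc)
  obtain ⟨M, hM⟩ := rat_int (a ^ 2 + d * b ^ 2) (by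
    have e : ((a ^ 2 + d * b ^ 2 : ℚ) : ℂ) = (a + b * w) * (a - b * w) := by
      push_cast; linear_combination (b ^ 2 : ℂ) * hw
    rw [e]; exact h.mul hc)
  have hdQ : (d : ℚ) ≠ 0 := by exact_mod_cast hd.ne'
  have hC2 : (d * (2 * b)) ^ 2 = ((d * (4 * M - A ^ 2) : ℤ) : ℚ) := by
    push_cast; rw [← hA, ← hM]; ring
  obtain ⟨C, hC⟩ : ∃ C : ℤ, d * (2 * b) = C := by
    have : IsIntegral ℤ (d * (2 * b) : ℚ) := by
      apply IsIntegral.of_pow (n := 2) (by norm_num)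
      rw [hC2]; exact isIntegral_algebraMap (x := d * (4 * M - A ^ 2))
    obtain ⟨z, hz⟩ := IsIntegrallyClosed.isIntegral_iff.mp this
    exact ⟨z, by simpa using hz.symm⟩
  have hdC : d ∣ C := by
    rw [← hsf.dvd_pow_iff_dvd two_ne_zero]
    refine ⟨4 * M - A ^ 2, ?_⟩
    rw [hC] at hC2; exact_mod_cast hC2
  obtain ⟨B, rfl⟩ := hdC
  have hB : 2 * b = B := by
    apply mul_left_cancel₀ hdQ; rw [hC]; push_cast; ring
  have hAB : A ^ 2 + d * B ^ 2 = 4 * M := by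
    have : (A : ℚ) ^ 2 + d * B ^ 2 = 4 * M := by rw [← hA, ← hB, ← hM]; ring
    exact_mod_cast this
  have hdq : ∃ c, d = 4 * c + 1 := ⟨d / 4, by omega⟩
  obtain ⟨c, rfl⟩ := hdq
  have hev : Even A ∧ Even B := by
    rcases Int.even_or_odd' A with ⟨x, rfl | rfl⟩ <;> rcases Int.even_or_odd' B with ⟨y, rfl | rfl⟩
    · exact ⟨⟨x, by ring⟩, ⟨y, by ring⟩⟩
    · exfalso; ring_nf at hAB; omega
    · exfalso; ring_nf at hAB; omega
    · exfalso; ring_nf at hAB; omega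
  obtain ⟨⟨x, rfl⟩, ⟨y, rfl⟩⟩ := hev
  refine ⟨x, y, ?_, ?_⟩
  · push_cast at hA; linarith
  · push_cast at hB; linarith

theorem exists_equiv (D d s : ℤ) (hd : 0 < d) (hs : 0 < s) (hsf : Squarefree d) (hd4 : d % 4 = 1)
    (hD : D = -d * s ^ 2) : Nonempty (ℤ√(-d) ≃+* 𝓞 (quadField D)) := by
  have hsC : (s : ℂ) ≠ 0 := by exact_mod_cast hs.ne'
  set r : ℂ := (D : ℂ) ^ ((1 : ℂ) / 2) with hr
  have hr2 : r ^ 2 = D := sqrt_sq D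
  have hrm : r ∈ quadField D := IntermediateField.mem_adjoin_simple_self ℚ r
  have hwm : r / s ∈ quadField D := by
    apply div_mem hrm
    exact intCast_mem _ s
  have hw2 : (r / s) ^ 2 = -(d : ℂ) := by
    rw [div_pow, hr2, hD]; push_cast; field_simp
  have hw2' : (⟨r / s, hwm⟩ : quadField D) ^ 2 = ((-d : ℤ) : quadField D) := by
    apply Subtype.ext; push_cast; exact hw2
  have hint : IsIntegral ℤ (⟨r / s, hwm⟩ : quadField D) := by
    apply IsIntegral.of_pow (n := 2) (by norm_num)
    rw [hw2']; exact isIntegral_algebraMap (x := -d)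
  let w : 𝓞 (quadField D) := ⟨⟨r / s, hwm⟩, hint⟩
  have hww : w * w = ((-d : ℤ) : 𝓞 (quadField D)) := by
    apply RingOfIntegers.ext
    rw [← pow_two]
    change algebraMap (𝓞 (quadField D)) (quadField D) (w ^ 2) = algebraMap (𝓞 (quadField D)) (quadField D) ((-d : ℤ) : 𝓞 (quadField D))
    rw [map_pow, map_intCast]
    exact hw2'
  let φ : ℤ√(-d) →+* 𝓞 (quadField D) := Zsqrtd.lift ⟨w, hww⟩
  have hinj : Function.Injective φ := by
    apply Zsqrtd.lift_injective
    intro n hn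
    nlinarith [mul_self_nonneg n]
  refine ⟨RingEquiv.ofBijective φ ⟨hinj, ?_⟩⟩
  intro x
  obtain ⟨a, b, hab⟩ := quad_mem D ((x : quadField D) : ℂ) (x : quadField D).2
  have hxi : IsIntegral ℤ ((x : quadField D) : ℂ) := 
    (RingOfIntegers.isIntegral_coe x).map ((quadField D).val.toRingHom.toIntAlgHom)
  have hab' : ((x : quadField D) : ℂ) = (a : ℂ) + ((b * s : ℚ) : ℂ) * (r / s) := by
    rw [hab, ← hr]; push_cast; field_simp
  rw [hab'] at hxi
  obtain ⟨X, Y, hX, hY⟩ := int_form d hd hsf hd4 (r / s) hw2 a (b * s) hxi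
  refine ⟨⟨X, Y⟩, ?_⟩
  apply RingOfIntegers.ext
  apply Subtype.ext
  rw [hab', hX, hY]
  have : φ ⟨X, Y⟩ = X + Y * w := Zsqrtd.lift_apply_apply _ _
  rw [this]
  change ((algebraMap (𝓞 (quadField D)) (quadField D) (X + Y * w) : quadField D) : ℂ) = _
  rw [map_add, map_mul, map_intCast, map_intCast]
  push_cast
  rfl

instance quad_nf (D : ℤ) : NumberField (quadField D) where
  to_charZero := inferInstance
  to_finiteDimensional := IntermediateField.adjoin.finiteDimensional (quad_isIntegral D)

theorem stmt_0 (n k : ℕ) (hn : 3 ≤ n) (hno : Odd n) (hk : 3 ≤ k) (hko : Odd k)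
    (d s : ℤ) (hd : 0 < d) (hs : 0 < s) (hsf : Squarefree (-d))
    (heq : (1 : ℤ) - 2 * (k : ℤ) ^ n = -d * s ^ 2) :
    n ∣ quadClassNumber (1 - 2 * (k : ℤ) ^ n) := by
  have hsf' : Squarefree d := by
    exact hsf.squarefree_of_dvd ⟨-1, by ring⟩
  have hmod : d % 4 = 1 := by
    have hkZ : Odd ((k : ℤ) ^ n) := by
      have : Odd (k : ℤ) := by exact_mod_cast hko
      exact this.pow
    obtain ⟨c, hc⟩ := hkZ
    rw [hc] at heq
    rcases Int.even_or_odd' s with ⟨x, rfl | rfl⟩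
    · have : 2 * (-2 * c) - 1 = 2 * (-2 * d * x ^ 2) := by linear_combination heq
      omega
    · have : d = 4 * (c - d * x ^ 2 - d * x) + 1 := by linear_combination heq
      omega
  obtain ⟨e⟩ := exists_equiv (1 - 2 * (k : ℤ) ^ n) d s hd hs hsf' hmod heq
  exact main_dedekind d s hd e n k hn hno hk hko (by linear_combination heq)
end

section
/- Let −d < −3 be a squarefree integer with −d ≢ 1 (mod 4), let k > 1 be an integer with gcd(k, 2d) = 1, and let x, y, z be positive integers with gcd(x, y) = 1 and x² + d·y² = 2k^z. Let R be the ring of integers of K = ℚ(√(−d)) and let α = x + y√(−d) ∈ R. Then there is a prime ideal 𝔭 of R with 2R = 𝔭², and there exists an ideal I of R with absolute norm N(I) = k such that the principal ideal αR equals 𝔭·I^z. -/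
open IntermediateField NumberField

theorem aux_sq {R : Type*} [CommRing R] (t u a b c : R) (h1 : t ^ 2 = 2 * u)
    (h2 : 2 = a * t ^ 2 + b * (2 * t) + c * 4) :
    Ideal.span {(2 : R)} = Ideal.span {(2 : R), t} ^ 2 := by
  rw [pow_two, Ideal.span_pair_mul_span_pair]
  apply le_antisymm
  · rw [Ideal.span_singleton_le_iff_mem]
    have : (2 : R) = a * (t * t) + b * (2 * t) + c * (2 * 2) := by
      linear_combination h2
    have hmem : a * (t * t) + b * (2 * t) + c * (2 * 2) ∈
        Ideal.span {(2 : R) * 2, 2 * t, t * 2, t * t} := by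
      refine Ideal.add_mem _ (Ideal.add_mem _ ?_ ?_) ?_ <;>
      · apply Ideal.mul_mem_left
        apply Ideal.subset_span
        simp
    exact (congrArg (· ∈ Ideal.span {(2 : R) * 2, 2 * t, t * 2, t * t}) this).mpr hmem
  · rw [Ideal.span_le]
    intro w hw
    simp only [Set.mem_insert_iff, Set.mem_singleton_iff] at hw
    rw [SetLike.mem_coe, Ideal.mem_span_singleton]
    rcases hw with rfl | rfl | rfl | rfl
    · exact ⟨2, rfl⟩
    · exact ⟨t, rfl⟩
    · exact ⟨t, mul_comm _ _⟩
    · exact ⟨u, by rw [← h1, pow_two]⟩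

theorem aux_gen {K : Type*} [Field K] [NumberField K] (hK : Module.finrank ℚ K = 2)
    (d : ℤ) (hsf : Squarefree (-d)) (hd4 : ¬ -d ≡ 1 [ZMOD 4])
    (k : ℤ) (hk : 1 < k) (hcop : Int.gcd k (2 * d) = 1)
    (x y z : ℕ) (hz : 0 < z) (hxy : Nat.gcd x y = 1)
    (heq : (x : ℤ) ^ 2 + d * (y : ℤ) ^ 2 = 2 * k ^ z)
    (s : 𝓞 K) (hs : s ^ 2 = -(d : 𝓞 K)) (σ : K ≃ₐ[ℚ] K) (hσ : σ (s : K) = -(s : K)) :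
    ∃ 𝔭 I : Ideal (𝓞 K), 𝔭.IsPrime ∧
        Ideal.span {(2 : 𝓞 K)} = 𝔭 ^ 2 ∧
        (Nat.card (𝓞 K ⧸ I) : ℤ) = k ∧
        Ideal.span {(x : 𝓞 K) + y * s} = 𝔭 * I ^ z := by
  have heqR : (x : 𝓞 K) ^ 2 + d * (y : 𝓞 K) ^ 2 = 2 * (k : 𝓞 K) ^ z := by
    exact_mod_cast congrArg (Int.cast : ℤ → 𝓞 K) heq
  have hd2 : ¬ (4 : ℤ) ∣ d := by
    rintro ⟨e, he⟩
    have := hsf 2 ⟨-e, by rw [he]; ring⟩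
    rw [Int.isUnit_iff] at this
    omega
  have hkodd : k % 2 = 1 := by
    by_contra h
    have h2 : (2 : ℤ) ∣ k := by omega
    have : (2 : ℤ) ∣ Int.gcd k (2 * d) := Int.dvd_coe_gcd h2 ⟨d, rfl⟩
    rw [hcop] at this
    norm_num at this
  -- the prime above two
  obtain ⟨p, hp2, hαp, hβp⟩ : ∃ p : Ideal (𝓞 K), Ideal.span {(2 : 𝓞 K)} = p ^ 2 ∧
      (x : 𝓞 K) + y * s ∈ p ∧ (x : 𝓞 K) - y * s ∈ p := by
    rw [Int.modEq_iff_dvd] at hd4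
    have hcase : (∃ f, d = 4 * f + 2) ∨ (∃ f, d = 4 * f + 1) := by
      have : d % 4 = 2 ∨ d % 4 = 1 := by omega
      rcases this with h | h
      · exact Or.inl ⟨d / 4, by omega⟩
      · exact Or.inr ⟨d / 4, by omega⟩
    rcases hcase with ⟨f, hf⟩ | ⟨f, hf⟩
    · have hfR : (d : 𝓞 K) = 4 * f + 2 := by rw [hf]; push_cast; ring
      have hxe : (2 : ℤ) ∣ (x : ℤ) := by
        apply Int.prime_two.dvd_of_dvd_pow (n := 2)
        exact ⟨k ^ z - (2 * f + 1) * y ^ 2, by rw [hf] at heq; linear_combination heq⟩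
      obtain ⟨w, hw⟩ := hxe
      have hwR : (x : 𝓞 K) = 2 * w := by exact_mod_cast congrArg (Int.cast : ℤ → 𝓞 K) hw
      refine ⟨Ideal.span {2, s}, aux_sq s (-(2 * f + 1)) (-1) 0 (-f) ?_ ?_, ?_, ?_⟩
      · rw [hs, hfR]; ring
      · rw [hs, hfR]; ring
      · rw [Ideal.mem_span_pair]; exact ⟨w, y, by rw [hwR]; ring⟩
      · rw [Ideal.mem_span_pair]; exact ⟨w, -y, by rw [hwR]; ring⟩
    · have hfR : (d : 𝓞 K) = 4 * f + 1 := by rw [hf]; push_cast; ring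
      have hxe : (2 : ℤ) ∣ (x : ℤ) - y := by
        have h1 : (2 : ℤ) ∣ (x : ℤ) ^ 2 + y ^ 2 :=
          ⟨k ^ z - 2 * f * y ^ 2, by rw [hf] at heq; linear_combination heq⟩
        apply Int.prime_two.dvd_of_dvd_pow (n := 2)
        have : ((x : ℤ) - y) ^ 2 = (x ^ 2 + y ^ 2) - 2 * (x * y) := by ring
        rw [this]
        exact dvd_sub h1 ⟨_, rfl⟩
      obtain ⟨w, hw⟩ := hxe
      have hwR : (x : 𝓞 K) - y = 2 * w := by exact_mod_cast congrArg (Int.cast : ℤ → 𝓞 K) hw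
      refine ⟨Ideal.span {2, 1 + s}, aux_sq (1 + s) (s - 2 * f) (-1) 1 (-f) ?_ ?_, ?_, ?_⟩
      · linear_combination hs - hfR
      · linear_combination hs - hfR
      · rw [Ideal.mem_span_pair]; exact ⟨w, y, by linear_combination -hwR⟩
      · rw [Ideal.mem_span_pair]; exact ⟨w + y, -y, by linear_combination -hwR⟩
  have hfr : Module.finrank ℤ (𝓞 K) = 2 := by rw [RingOfIntegers.rank, hK]
  have hNp : Ideal.absNorm p = 2 := by
    have h := congrArg Ideal.absNorm hp2
    have h4 := Ideal.absNorm_span_natCast (S := 𝓞 K) 2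
    rw [hfr] at h4
    rw [map_pow] at h
    have : (Ideal.absNorm p) ^ 2 = 2 ^ 2 := by rw [← h, ← h4]; simp
    exact Nat.pow_left_injective (n := 2) (by norm_num) this
  have hpp : p.IsPrime := Ideal.isPrime_of_irreducible_absNorm (by rw [hNp]; exact Nat.prime_two)
  -- factor
  obtain ⟨A, hA⟩ := Ideal.dvd_span_singleton.mpr hαp
  obtain ⟨B, hB⟩ := Ideal.dvd_span_singleton.mpr hβp
  have hp0 : p ≠ 0 := by
    rintro rfl
    simp at hNp
  have hprod : ((x : 𝓞 K) + y * s) * (x - y * s) = 2 * (k : 𝓞 K) ^ z := by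
    linear_combination heqR - (y : 𝓞 K) ^ 2 * hs
  have hAB : A * B = Ideal.span {(k : 𝓞 K)} ^ z := by
    apply mul_left_cancel₀ (pow_ne_zero 2 hp0)
    rw [← hp2, Ideal.span_singleton_pow, Ideal.span_singleton_mul_span_singleton, ← hprod,
      ← Ideal.span_singleton_mul_span_singleton, hA, hB, hp2]
    ring
  have hkx : IsCoprime (2 * (x : ℤ)) (k ^ z) := by
    apply IsCoprime.pow_right
    rw [Int.isCoprime_iff_gcd_eq_one]
    by_contra hne
    obtain ⟨q, hq, hqd⟩ := Nat.exists_prime_and_dvd hne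
    have hqZ : Prime (q : ℤ) := Nat.prime_iff_prime_int.mp hq
    have hq1 : (q : ℤ) ∣ 2 * x := (Int.natCast_dvd_natCast.mpr hqd).trans (Int.gcd_dvd_left _ _)
    have hqk : (q : ℤ) ∣ k := (Int.natCast_dvd_natCast.mpr hqd).trans (Int.gcd_dvd_right _ _)
    have hnd : ¬ (q : ℤ) ∣ 2 * d := by
      intro h
      have : (q : ℤ) ∣ Int.gcd k (2 * d) := Int.dvd_coe_gcd hqk h
      rw [hcop] at this
      exact hqZ.not_dvd_one (by exact_mod_cast this)
    have hqx : (q : ℤ) ∣ x := (hqZ.dvd_or_dvd hq1).resolve_left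
      (fun h => hnd (h.mul_right d))
    have hqy : (q : ℤ) ∣ d * y ^ 2 := by
      have : d * (y : ℤ) ^ 2 = 2 * k ^ z - x ^ 2 := by linear_combination heq
      rw [this]
      exact dvd_sub (Dvd.dvd.mul_left (dvd_pow hqk hz.ne') _) (dvd_pow hqx (by norm_num))
    have hqy' : (q : ℤ) ∣ y := hqZ.dvd_of_dvd_pow
      ((hqZ.dvd_or_dvd hqy).resolve_left (fun h => hnd (h.mul_left 2)))
    have := Nat.dvd_gcd (Int.natCast_dvd_natCast.mp hqx) (Int.natCast_dvd_natCast.mp hqy')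
    rw [hxy] at this
    exact hq.one_lt.ne' (Nat.dvd_one.mp this)
  have hαA : (x : 𝓞 K) + y * s ∈ A := by
    rw [← Ideal.span_singleton_le_iff_mem, hA]; exact Ideal.mul_le_right
  have hβB : (x : 𝓞 K) - y * s ∈ B := by
    rw [← Ideal.span_singleton_le_iff_mem, hB]; exact Ideal.mul_le_right
  have hcopAB : IsCoprime A B := by
    rw [Ideal.isCoprime_iff_sup_eq, Ideal.eq_top_iff_one]
    obtain ⟨a, b, hab⟩ := hkx
    have habR : (a : 𝓞 K) * (2 * x) + b * (k : 𝓞 K) ^ z = 1 := by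
      exact_mod_cast congrArg (Int.cast : ℤ → 𝓞 K) hab
    rw [← habR]
    apply Ideal.add_mem
    · apply Ideal.mul_mem_left
      have : (2 : 𝓞 K) * x = (x + y * s) + (x - y * s) := by ring
      rw [this]
      exact Ideal.add_mem _ (Ideal.mem_sup_left hαA) (Ideal.mem_sup_right hβB)
    · apply Ideal.mul_mem_left
      apply Ideal.mem_sup_left
      have : Ideal.span {(k : 𝓞 K)} ^ z ≤ A := by rw [← hAB]; exact Ideal.mul_le_left
      exact this (Ideal.pow_mem_pow (Ideal.mem_span_singleton_self _) z)
  obtain ⟨I, hI⟩ : ∃ I : Ideal (𝓞 K), A = I ^ z :=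
    exists_eq_pow_of_mul_eq_pow_of_coprime hcopAB hAB
  refine ⟨p, I, hpp, hp2, ?_, by rw [hA, hI]⟩
  -- the norm
  have hNeq : Algebra.norm ℚ (((x : 𝓞 K) + y * s : 𝓞 K) : K) =
      Algebra.norm ℚ (((x : 𝓞 K) - y * s : 𝓞 K) : K) := by
    rw [← Algebra.norm_eq_of_algEquiv σ]
    congr 1
    simp [hσ, sub_eq_add_neg]
  have hNZ : Algebra.norm ℤ ((x : 𝓞 K) + y * s) = Algebra.norm ℤ ((x : 𝓞 K) - y * s) := by
    rw [← Algebra.coe_norm_int, ← Algebra.coe_norm_int] at hNeq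
    exact_mod_cast hNeq
  have hk0 : ((k.toNat : ℕ) : ℤ) = k := Int.toNat_of_nonneg (by omega)
  have hNα : Ideal.absNorm (Ideal.span {(x : 𝓞 K) + y * s}) = 2 * k.toNat ^ z := by
    have h1 : Ideal.absNorm (Ideal.span {(x : 𝓞 K) + y * s}) =
        Ideal.absNorm (Ideal.span {(x : 𝓞 K) - y * s}) := by
      rw [Ideal.absNorm_span_singleton, Ideal.absNorm_span_singleton, hNZ]
    have h2 := Ideal.absNorm_span_natCast (S := 𝓞 K) (2 * k.toNat ^ z)
    have h3 : ((2 * k.toNat ^ z : ℕ) : 𝓞 K) = ((x : 𝓞 K) + y * s) * (x - y * s) := by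
      rw [hprod]
      conv_rhs => rw [← hk0]
      push_cast
      rfl
    rw [h3, ← Ideal.span_singleton_mul_span_singleton, map_mul, ← h1, hfr, ← pow_two] at h2
    exact Nat.pow_left_injective (n := 2) (by norm_num) h2
  rw [hA, map_mul, hNp, hI, map_pow] at hNα
  have hfin : Ideal.absNorm I = k.toNat :=
    Nat.pow_left_injective hz.ne' (by simpa using hNα)
  rw [← hk0, ← hfin]
  rfl

theorem aux_root (d : ℤ) (hd : 0 < d) :
    (((-d : ℤ) : ℂ)) ^ ((1 : ℂ) / 2) = (Real.sqrt d : ℂ) * Complex.I := by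
  have hdr : (0 : ℝ) ≤ d := by exact_mod_cast hd.le
  have h1 : (((-d : ℤ) : ℂ)) = ((-(d : ℝ) : ℝ) : ℂ) := by push_cast; ring
  rw [h1, one_div]
  apply Complex.ext
  · rw [Complex.cpow_inv_two_re]
    simp [abs_of_nonneg hdr]
  · rw [Complex.cpow_inv_two_im_eq_sqrt (by simp)]
    simp [abs_of_nonneg hdr]

theorem stmt_8 (d : ℤ) (hd3 : -d < -3) (hsf : Squarefree (-d)) (hd4 : ¬ -d ≡ 1 [ZMOD 4])
    (k : ℤ) (hk : 1 < k) (hcop : Int.gcd k (2 * d) = 1)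
    (x y z : ℕ) (hx : 0 < x) (hy : 0 < y) (hz : 0 < z) (hxy : Nat.gcd x y = 1)
    (heq : (x : ℤ) ^ 2 + d * (y : ℤ) ^ 2 = 2 * k ^ z) :
    ∃ α : 𝓞 (quadField (-d)),
      ((α : quadField (-d)) : ℂ) = (x : ℂ) + (y : ℂ) * Real.sqrt d * Complex.I ∧
      ∃ 𝔭 I : Ideal (𝓞 (quadField (-d))), 𝔭.IsPrime ∧
        Ideal.span {(2 : 𝓞 (quadField (-d)))} = 𝔭 ^ 2 ∧
        -- the absolute norm of `I` (the cardinality of the quotient ring) is `k`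
        (Nat.card (𝓞 (quadField (-d)) ⧸ I) : ℤ) = k ∧
        Ideal.span {α} = 𝔭 * I ^ z := by
  have hd0 : 0 < d := by omega
  have hroot := aux_root d hd0
  set r : ℂ := ((-d : ℤ) : ℂ) ^ ((1 : ℂ) / 2) with hr
  have hr2 : r ^ 2 = -(d : ℂ) := by
    rw [hr, ← Complex.cpow_nat_mul]
    norm_num
  have hpm : (Polynomial.X ^ 2 + Polynomial.C (d : ℚ)).Monic :=
    Polynomial.monic_X_pow_add_C _ (by norm_num)
  have hp0 : Polynomial.aeval r (Polynomial.X ^ 2 + Polynomial.C (d : ℚ)) = 0 := by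
    simp [hr2]
  have hpdeg : (Polynomial.X ^ 2 + Polynomial.C (d : ℚ)).natDegree = 2 :=
    Polynomial.natDegree_X_pow_add_C
  have hpirr : Irreducible (Polynomial.X ^ 2 + Polynomial.C (d : ℚ)) := by
    apply Polynomial.irreducible_of_degree_le_three_of_not_isRoot
    · rw [hpdeg]; decide
    · intro w hw
      simp at hw
      have : (0 : ℚ) < d := by exact_mod_cast hd0
      nlinarith [sq_nonneg w]
  have hint : IsIntegral ℚ r := ⟨_, hpm, hp0⟩
  have hmin : minpoly ℚ r = Polynomial.X ^ 2 + Polynomial.C (d : ℚ) :=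
    (minpoly.eq_of_irreducible_of_monic hpirr hp0 hpm).symm
  have hfd : FiniteDimensional ℚ (quadField (-d)) := adjoin.finiteDimensional hint
  have hnf : NumberField (quadField (-d)) := { }
  have hfin : Module.finrank ℚ (quadField (-d)) = 2 := by
    have := adjoin.finrank hint
    rw [hmin, hpdeg] at this
    exact this
  obtain ⟨pb, hpb⟩ : ∃ pb : PowerBasis ℚ (quadField (-d)), (pb.gen : ℂ) = r :=
    ⟨adjoin.powerBasis hint, by rw [adjoin.powerBasis_gen]; rfl⟩
  have hg2 : pb.gen ^ 2 = -(d : quadField (-d)) := by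
    apply Subtype.ext
    push_cast
    rw [hpb, hr2]
  have hming : minpoly ℚ pb.gen = Polynomial.X ^ 2 + Polynomial.C (d : ℚ) := by
    symm
    apply minpoly.eq_of_irreducible_of_monic hpirr _ hpm
    simp [hg2]
  have hy0 : Polynomial.aeval (-pb.gen) (minpoly ℚ pb.gen) = 0 := by
    rw [hming]; simp [hg2]
  let σ : quadField (-d) ≃ₐ[ℚ] quadField (-d) :=
    AlgEquiv.ofBijective (pb.lift (-pb.gen) hy0) (AlgHom.bijective _)
  have hσ : σ pb.gen = -pb.gen := pb.lift_gen _ hy0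
  have hgint : IsIntegral ℤ pb.gen :=
    ⟨Polynomial.X ^ 2 + Polynomial.C d, Polynomial.monic_X_pow_add_C _ (by norm_num), by
      rw [Polynomial.eval₂_add, Polynomial.eval₂_C, Polynomial.eval₂_pow, Polynomial.eval₂_X, hg2]
      simp⟩
  let s : 𝓞 (quadField (-d)) := ⟨pb.gen, hgint⟩
  have hsg : algebraMap (𝓞 (quadField (-d))) (quadField (-d)) s = pb.gen := rfl
  have hs : s ^ 2 = -(d : 𝓞 (quadField (-d))) := by
    apply RingOfIntegers.ext
    simpa [hsg] using hg2
  refine ⟨x + y * s, ?_, ?_⟩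
  · have : (((x + y * s : 𝓞 (quadField (-d))) : quadField (-d)) : ℂ) = x + y * r := by
      rw [← hpb]; simp [hsg]
    rw [this, hroot]; ring
  · exact aux_gen hfin d hsf hd4 k hk hcop x y z hz hxy heq s hs σ hσ
end

section
/- Let d be a squarefree positive integer, k an odd integer with k > 1 and gcd(k, 2d) = 1, n₁ a positive integer, and u, v positive integers with gcd(u, v) = 1 and u² + d·v² = 2k^{n₁}. Set α = (u + v√d·i)/√2 and β = (−u + v√d·i)/√2 in ℂ. Then (α + β)² = −2d·v² and α·β = −k^{n₁} are coprime rational integers, and α/β is not a root of unity. -/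
theorem stmt_9 (d : ℕ) (hd : 0 < d) (hsf : Squarefree d)
    (k : ℤ) (hk : 1 < k) (hko : Odd k) (hcop : Int.gcd k (2 * d) = 1)
    (n₁ : ℕ) (hn₁ : 0 < n₁)
    (u v : ℕ) (hu : 0 < u) (hv : 0 < v) (huv : Nat.gcd u v = 1)
    (heq : (u : ℤ) ^ 2 + d * (v : ℤ) ^ 2 = 2 * k ^ n₁)
    (α β : ℂ)
    (hα : α = ((u : ℂ) + (v : ℂ) * Real.sqrt d * Complex.I) / Real.sqrt 2)
    (hβ : β = (-(u : ℂ) + (v : ℂ) * Real.sqrt d * Complex.I) / Real.sqrt 2) :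
    (α + β) ^ 2 = ((-2 * d * v ^ 2 : ℤ) : ℂ) ∧
    α * β = ((-k ^ n₁ : ℤ) : ℂ) ∧
    IsCoprime (-2 * (d : ℤ) * (v : ℤ) ^ 2) (-k ^ n₁) ∧
    ¬ ∃ N : ℕ, 0 < N ∧ (α / β) ^ N = 1 := by
  have hs2 : ((Real.sqrt 2 : ℝ) : ℂ) ^ 2 = 2 := by
    rw [← Complex.ofReal_pow, Real.sq_sqrt (by norm_num)]; norm_num
  have hsd : ((Real.sqrt d : ℝ) : ℂ) ^ 2 = d := by
    rw [← Complex.ofReal_pow, Real.sq_sqrt (by positivity)]; norm_num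
  have hs0 : ((Real.sqrt 2 : ℝ) : ℂ) ≠ 0 := by
    intro h; rw [h] at hs2; norm_num at hs2
  have hI := Complex.I_sq
  have heqC : (u : ℂ) ^ 2 + d * (v : ℂ) ^ 2 = 2 * (k : ℂ) ^ n₁ := by exact_mod_cast heq
  have h1 : (α + β) ^ 2 = -2 * d * (v : ℂ) ^ 2 := by
    have : α + β = 2 * (v * Real.sqrt d * Complex.I) / Real.sqrt 2 := by
      rw [hα, hβ]; ring
    rw [this, div_pow, hs2, mul_pow, mul_pow, mul_pow, hsd, hI]; ring
  have h2 : α * β = -(k : ℂ) ^ n₁ := by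
    have : α * β = ((v : ℂ) ^ 2 * (Real.sqrt d : ℂ) ^ 2 * Complex.I ^ 2 - u ^ 2)
        / (Real.sqrt 2 : ℂ) ^ 2 := by
      rw [hα, hβ]; field_simp; ring
    rw [this, hs2, hsd, hI]
    linear_combination (-1 / 2 : ℂ) * heqC
  have hk2d : IsCoprime k (2 * d) := Int.isCoprime_iff_gcd_eq_one.mpr hcop
  have huvZ : IsCoprime (u : ℤ) (v : ℤ) := Nat.isCoprime_iff_coprime.mpr huv
  have hvk : IsCoprime (v : ℤ) (k ^ n₁) := by
    have h : IsCoprime ((u : ℤ) ^ 2 + v * (d * v)) v :=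
      (huvZ.pow_left (m := 2)).add_mul_left_left _
    have e : (u : ℤ) ^ 2 + v * (d * v) = 2 * k ^ n₁ := by rw [← heq]; ring
    rw [e] at h
    exact h.of_mul_left_right.symm
  have hc : IsCoprime (2 * (d : ℤ) * (v : ℤ) ^ 2) (k ^ n₁) :=
    IsCoprime.mul_left (hk2d.symm.pow_right) hvk.pow_left
  refine ⟨by rw [h1]; push_cast; ring, by rw [h2]; push_cast; ring, ?_, ?_⟩
  · have := hc.neg_neg
    rwa [← neg_mul, ← neg_mul] at this
  rintro ⟨N, hN, hζ⟩
  have hkC : (k : ℂ) ^ n₁ ≠ 0 := pow_ne_zero _ (by exact_mod_cast (by omega : k ≠ 0))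
  have hab : α * β ≠ 0 := by rw [h2]; exact neg_ne_zero.mpr hkC
  have ha := left_ne_zero_of_mul hab
  have hb := right_ne_zero_of_mul hab
  have i1 : IsIntegral ℤ (α / β) := IsIntegral.of_pow hN (by rw [hζ]; exact isIntegral_one)
  have i2 : IsIntegral ℤ (β / α) := IsIntegral.of_pow hN (by
    rw [← inv_div, inv_pow, hζ, inv_one]; exact isIntegral_one)
  have i3 : IsIntegral ℤ (α / β + β / α + 2) :=
    (i1.add i2).add (by simpa using (isIntegral_algebraMap (R := ℤ) (A := ℂ) (x := 2)))
  have e3 : α / β + β / α + 2 = algebraMap ℚ ℂ ((2 * d * v ^ 2 : ℚ) / (k : ℚ) ^ n₁) := by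
    have : α / β + β / α + 2 = (α + β) ^ 2 / (α * β) := by field_simp; ring
    rw [this, h1, h2]
    simp
  rw [e3, isIntegral_algebraMap_iff (algebraMap ℚ ℂ).injective,
    IsIntegrallyClosed.isIntegral_iff] at i3
  obtain ⟨y, hy⟩ := i3
  have hkQ : (k : ℚ) ^ n₁ ≠ 0 := pow_ne_zero _ (by exact_mod_cast (by omega : k ≠ 0))
  rw [eq_div_iff hkQ] at hy
  have hy' : y * k ^ n₁ = 2 * (d : ℤ) * (v : ℤ) ^ 2 := by
    have : (y : ℚ) * (k : ℚ) ^ n₁ = 2 * d * v ^ 2 := by simpa using hy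
    exact_mod_cast this
  have hun : IsUnit (k ^ n₁) := hc.isUnit_of_dvd' ⟨y, by rw [← hy']; ring⟩ dvd_rfl
  have hku : IsUnit k := (isUnit_pow_iff hn₁.ne').mp hun
  rcases Int.isUnit_iff.mp hku with h | h <;> omega
end

section
/- For every odd integer n ≥ 3, there are infinitely many pairs of distinct negative integers (d, d+1), with both d < 0 and d + 1 < 0, such that n divides the class number of the imaginary quadratic field ℚ(√d) and n divides the class number of the imaginary quadratic field ℚ(√(d+1)). Equivalently, the set of such pairs of fields (ℚ(√d), ℚ(√(d+1))) is infinite. -/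
open IntermediateField NumberField

/-- If `α α' = c ^ n` with `α, α'` comaximal and `α` is not a unit times an `m`-th power for
`1 < m ∣ n`, then `n` divides the class number. -/
lemma ideal_part {R : Type*} [CommRing R] [IsDedekindDomain R] (α α' c : R) (n : ℕ)
    (hn : 0 < n) (h : α * α' = c ^ n) (hs : α + α' = 1) (hα : α ≠ 0)
    (key : ∀ (l m : ℕ) (β : R) (u : Rˣ), n = l * m → α = u * β ^ m → m = 1) :
    n ∣ Nat.card (ClassGroup R) := by
  classical
  have hc : IsCoprime (Ideal.span {α}) (Ideal.span {α'}) := by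
    rw [Ideal.isCoprime_span_singleton_iff]
    exact ⟨1, 1, by simpa using hs⟩
  have hm : Ideal.span {α} * Ideal.span {α'} = (Ideal.span {c}) ^ n := by
    rw [Ideal.span_singleton_mul_span_singleton, h, Ideal.span_singleton_pow]
  obtain ⟨I, hI⟩ : ∃ I, Ideal.span {α} = I ^ n :=
    exists_eq_pow_of_mul_eq_pow (by rw [Ideal.isCoprime_iff_gcd] at hc; rw [hc]; exact isUnit_one) hm
  have hI0 : I ≠ 0 := by
    rintro rfl
    rw [zero_pow hn.ne'] at hI
    exact hα (by simpa using hI)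
  have hI1 : I ∈ nonZeroDivisors (Ideal R) := mem_nonZeroDivisors_of_ne_zero hI0
  set x : ClassGroup R := ClassGroup.mk0 ⟨I, hI1⟩ with hx
  have hpow : ∀ k : ℕ, x ^ k = 1 ↔ Submodule.IsPrincipal (I ^ k) := by
    intro k
    rw [← ClassGroup.mk0_eq_one_iff (pow_mem hI1 k), hx, ← map_pow]
    rfl
  have hxn : x ^ n = 1 := by
    rw [hpow, ← hI]
    exact ⟨⟨α, rfl⟩⟩
  obtain ⟨m, hm⟩ := orderOf_dvd_of_pow_eq_one hxn
  obtain ⟨⟨β, hβ⟩⟩ := (hpow _).1 (pow_orderOf_eq_one x)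
  have hβ' : I ^ orderOf x = Ideal.span {β} := hβ
  have h2 : Ideal.span {β ^ m} = Ideal.span {α} := by
    rw [hI, ← Ideal.span_singleton_pow, ← hβ', ← pow_mul, ← hm]
  obtain ⟨u, hu⟩ := Ideal.span_singleton_eq_span_singleton.1 h2
  have := key (orderOf x) m β u hm (by rw [← hu, mul_comm])
  rw [this, mul_one] at hm
  rw [hm]
  exact orderOf_dvd_natCard x

/-- The Lucas companion sequence. -/
def lucT (s V : ℤ) : ℕ → ℤ
  | 0 => 2
  | 1 => s
  | (k + 2) => s * lucT s V (k + 1) - V * lucT s V k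

lemma lucT_eq (s V : ℤ) (x y : ℂ) (h1 : x + y = s) (h2 : x * y = V) (k : ℕ) :
    (lucT s V k : ℂ) = x ^ k + y ^ k ∧ (lucT s V (k + 1) : ℂ) = x ^ (k + 1) + y ^ (k + 1) := by
  induction k with
  | zero => simp [lucT, h1]; norm_num
  | succ k ih =>
    refine ⟨ih.2, ?_⟩
    rw [lucT]
    push_cast
    rw [ih.1, ih.2, ← h1, ← h2]
    ring

lemma lucT_dvd (s V : ℤ) (j : ℕ) : s ∣ lucT s V (2 * j + 1) := by
  induction j with
  | zero => simp [lucT]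
  | succ j ih =>
    show s ∣ lucT s V ((2 * j + 1) + 2)
    rw [lucT]
    exact dvd_sub (dvd_mul_right _ _) (dvd_mul_of_dvd_right ih _)

lemma lucT_mod (s V : ℤ) (hs : s * s = 1) (k : ℕ) :
    V ^ 2 ∣ lucT s V (k + 2) - s ^ (k + 2) * (1 - (k + 2) * V) ∧
    V ^ 2 ∣ lucT s V (k + 3) - s ^ (k + 3) * (1 - (k + 3) * V) := by
  induction k with
  | zero =>
    constructor
    · simp only [lucT]
      exact ⟨0, by push_cast; linear_combination 2 * V * hs⟩
    · simp only [lucT]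
      exact ⟨0, by push_cast; linear_combination 3 * s * V * hs⟩
  | succ k ih =>
    obtain ⟨⟨a, ha⟩, ⟨b, hb⟩⟩ := ih
    refine ⟨⟨b, by push_cast; rw [← hb]; ring_nf⟩, ?_⟩
    show V ^ 2 ∣ lucT s V ((k + 2) + 2) - s ^ (k + 4) * (1 - ((k + 1 : ℕ) + 3) * V)
    rw [lucT]
    refine ⟨s ^ (k + 2) * (k + 2) + s * b - V * a, ?_⟩
    push_cast
    linear_combination s * hb - V * ha + s ^ (k + 2) * V * hs

lemma lucT_main (s V : ℤ) (m : ℕ) (hm : Odd m) (hm1 : m ≠ 1) (hV : 3 ≤ V)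
    (h : lucT s V m = 1 ∨ lucT s V m = -1) : V ∣ m := by
  obtain ⟨j, rfl⟩ := hm
  have hs : s * s = 1 := by
    have h1 := lucT_dvd s V j
    have h2 : s ∣ 1 := by
      rcases h with h | h <;> rw [h] at h1
      · exact h1
      · simpa using h1
    rcases Int.isUnit_iff.1 (isUnit_of_dvd_one h2) with h | h <;> simp [h]
  obtain ⟨i, rfl⟩ : ∃ i, j = i + 1 := ⟨j - 1, by omega⟩
  have h1 := (lucT_mod s V hs (2 * i)).2
  have e1 : 2 * i + 3 = 2 * (i + 1) + 1 := by ring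
  have e2 : ((2 * i : ℕ) : ℤ) + 3 = 2 * ((i + 1 : ℕ) : ℤ) + 1 := by push_cast; ring
  rw [e1, e2] at h1
  generalize i + 1 = j at *
  have hs' : s ^ (2 * j + 1) = 1 ∨ s ^ (2 * j + 1) = -1 := by
    rw [pow_succ, pow_mul, pow_two, hs, one_pow, one_mul]
    exact mul_self_eq_one_iff.1 hs
  have aux : V ^ 2 ∣ (2 * j + 1) * V → V ∣ ((2 * j + 1 : ℕ) : ℤ) := by
    rintro ⟨q, hq⟩
    refine ⟨q, ?_⟩
    have : V ≠ 0 := by omega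
    apply mul_right_cancel₀ this
    push_cast
    rw [hq]; ring
  have no2 : ¬ V ∣ 2 := fun h => by have := Int.le_of_dvd (by norm_num) h; omega
  rcases h with h | h <;> rcases hs' with h' | h' <;> rw [h, h'] at h1
  · exact aux (by convert h1 using 1; ring)
  · exfalso
    obtain ⟨q, hq⟩ := h1
    exact no2 ⟨2 * j + 1 + V * q, by linear_combination hq⟩
  · exfalso
    obtain ⟨q, hq⟩ := h1
    exact no2 ⟨2 * j + 1 - V * q, by linear_combination -hq⟩
  · exact aux (by
      have e : (-1 : ℤ) - -1 * (1 - (2 * (j : ℤ) + 1) * V) = -((2 * j + 1) * V) := by ring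
      rw [e, dvd_neg] at h1
      exact h1)

lemma rep (r : ℂ) (d : ℤ) (hr : r ^ 2 = d) (hd : d < 0) {z : ℂ} (hz : z ∈ ℚ⟮r⟯) :
    ∃ a b : ℚ, z = a + b * r := by
  induction hz using IntermediateField.adjoin_induction with
  | mem x hx => exact ⟨0, 1, by simp at hx; simp [hx]⟩
  | algebraMap x => exact ⟨x, 0, by simp⟩
  | add x y hx hy h1 h2 =>
    obtain ⟨a, b, rfl⟩ := h1
    obtain ⟨a', b', rfl⟩ := h2
    exact ⟨a + a', b + b', by push_cast; ring⟩
  | mul x y hx hy h1 h2 =>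
    obtain ⟨a, b, rfl⟩ := h1
    obtain ⟨a', b', rfl⟩ := h2
    exact ⟨a * a' + b * b' * d, a * b' + a' * b, by push_cast; rw [← hr]; ring⟩
  | inv x hx h1 =>
    obtain ⟨a, b, rfl⟩ := h1
    by_cases h0 : (a : ℂ) + b * r = 0
    · exact ⟨0, 0, by simp [h0]⟩
    have hne : a ^ 2 - b ^ 2 * d ≠ 0 := by
      intro h
      have hd' : (d : ℚ) < 0 := by exact_mod_cast hd
      have hb : b = 0 := by
        by_contra hb
        have : 0 < b ^ 2 := by positivity
        nlinarith [sq_nonneg a]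
      subst hb
      have ha : a = 0 := by simpa using h
      subst ha
      simp at h0
    refine ⟨a / (a ^ 2 - b ^ 2 * d), -b / (a ^ 2 - b ^ 2 * d), ?_⟩
    have hne' : (a : ℂ) ^ 2 - b ^ 2 * d ≠ 0 := by exact_mod_cast hne
    apply inv_eq_of_mul_eq_one_right
    push_cast
    rw [← hr] at hne' ⊢
    field_simp
    ring

lemma int_of_rat (q : ℚ) (z : ℂ) (h : IsIntegral ℤ z) (hz : z = q) : ∃ s : ℤ, (q : ℚ) = s := by
  have : IsIntegral ℤ q := by
    have h2 : IsIntegral ℤ (algebraMap ℚ ℂ q) := by simpa [← hz] using h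
    exact (isIntegral_algebraMap_iff (algebraMap ℚ ℂ).injective).1 h2
  obtain ⟨y, hy⟩ := IsIntegrallyClosed.isIntegral_iff.1 this
  exact ⟨y, by simpa using hy.symm⟩

lemma rat_unit (E s : ℤ) (b : ℚ) (hE4 : E % 4 = 3) (hE3 : ¬ (3 : ℤ) ∣ E) (hE : 0 < E)
    (h : (s : ℚ) ^ 2 + 4 * b ^ 2 * E = 4) : b = 0 := by
  by_contra hb
  have hE' : (0 : ℚ) < E := by exact_mod_cast hE
  have hb2 : 0 < b ^ 2 := by positivity
  have hs : (s : ℚ) ^ 2 < 4 := by nlinarith [mul_pos hb2 hE']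
  have hs' : s ^ 2 < 4 := by exact_mod_cast hs
  have hs1 : -2 < s := by nlinarith
  have hs2 : s < 2 := by nlinarith
  have case1 : (s : ℚ) ^ 2 ≠ 1 := by
    intro h1
    have h3 : IsSquare ((3 * E : ℤ) : ℚ) := ⟨2 * b * E, by
      push_cast; linear_combination (-E : ℚ) * h + E * h1⟩
    rw [Rat.isSquare_intCast_iff] at h3
    obtain ⟨c, hc⟩ := h3
    have : (3 : ℤ) ∣ c * c := ⟨E, hc.symm⟩
    have : (3 : ℤ) ∣ c := by
      rcases Int.prime_three.dvd_mul.1 this with h | h <;> exact h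
    obtain ⟨e, rfl⟩ := this
    exact hE3 ⟨e * e, by linarith⟩
  have : s = -1 ∨ s = 0 ∨ s = 1 := by omega
  rcases this with rfl | rfl | rfl
  · exact case1 (by norm_num)
  · have h3 : IsSquare (E : ℚ) := ⟨b * E, by
      push_cast at h; linear_combination (-E / 4 : ℚ) * h⟩
    rw [Rat.isSquare_intCast_iff] at h3
    obtain ⟨c, hc⟩ := h3
    rcases Int.even_or_odd' c with ⟨e, rfl | rfl⟩
    · ring_nf at hc; omega
    · ring_nf at hc; omega
  · exact case1 (by norm_num)

lemma main_div (n U : ℕ) (y d : ℤ) (hn : 3 ≤ n) (hno : Odd n) (hU : n < U)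
    (hy : y ≠ 0) (hd : d = y ^ 2 * (1 - 4 * (U : ℤ) ^ n)) (h3 : ¬ (3 : ℤ) ∣ 4 * (U : ℤ) ^ n - 1) :
    n ∣ quadClassNumber d := by
  obtain ⟨r, hrdef⟩ : ∃ r : ℂ, r = (d : ℂ) ^ ((1 : ℂ) / 2) := ⟨_, rfl⟩
  have hr : r ^ 2 = d := by
    rw [hrdef, ← Complex.cpow_nat_mul]; simp
  have hUpos : (0 : ℤ) < (U : ℤ) ^ n := by
    have : 0 < U := by omega
    positivity
  have hd0 : d < 0 := by
    rw [hd]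
    have : 0 < y ^ 2 := by positivity
    nlinarith
  suffices H : n ∣ Nat.card (ClassGroup (𝓞 ℚ⟮r⟯)) by subst hrdef; exact H
  have hrint : IsIntegral ℚ r := ⟨Polynomial.X ^ 2 - Polynomial.C (d : ℚ),
    Polynomial.monic_X_pow_sub_C _ (by norm_num), by
      rw [Polynomial.eval₂_sub, Polynomial.eval₂_X_pow, Polynomial.eval₂_C, hr]; simp⟩
  have : FiniteDimensional ℚ ℚ⟮r⟯ := adjoin.finiteDimensional hrint
  have : NumberField ℚ⟮r⟯ := ⟨⟩
  have hyC : (y : ℂ) ≠ 0 := by exact_mod_cast hy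
  have hyQ : (y : ℚ) ≠ 0 := by exact_mod_cast hy
  obtain ⟨δ, hδdef⟩ : ∃ δ : ℂ, δ = r / y := ⟨_, rfl⟩
  have hδ : δ ^ 2 = 1 - 4 * (U : ℂ) ^ n := by
    rw [hδdef, div_pow, hr, hd]; push_cast; field_simp
  obtain ⟨E, hEdef⟩ : ∃ E : ℤ, E = 4 * (U : ℤ) ^ n - 1 := ⟨_, rfl⟩
  have hδE : δ ^ 2 = -E := by rw [hδ, hEdef]; push_cast; ring
  have hE : 0 < E := by omega
  have hE4 : E % 4 = 3 := by omega
  rw [← hEdef] at h3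
  have hconj : (starRingEnd ℂ) δ = -δ := by
    have h1 : ((starRingEnd ℂ) δ) ^ 2 = δ ^ 2 := by
      rw [← map_pow, hδE]; simp
    rcases sq_eq_sq_iff_eq_or_eq_neg.1 h1 with h | h
    · exfalso
      obtain ⟨x, rfl⟩ := Complex.conj_eq_iff_real.1 h
      have : x ^ 2 = -(E : ℝ) := by exact_mod_cast hδE
      have hE' : (0 : ℝ) < E := by exact_mod_cast hE
      nlinarith [sq_nonneg x]
    · exact h
  have hδK : δ ∈ ℚ⟮r⟯ := by
    rw [hδdef]
    exact div_mem (mem_adjoin_simple_self ℚ r) (intCast_mem _ y)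
  have hrep : ∀ z ∈ ℚ⟮r⟯, ∃ a b : ℚ, z = a + b * δ := by
    intro z hz
    obtain ⟨a, b, h⟩ := rep r d hr hd0 hz
    refine ⟨a, b * y, ?_⟩
    rw [h, hδdef]; push_cast; field_simp
  -- integral elements
  let ι : 𝓞 ℚ⟮r⟯ →+* ℂ := (algebraMap ℚ⟮r⟯ ℂ).comp (algebraMap (𝓞 ℚ⟮r⟯) ℚ⟮r⟯)
  have hιinj : Function.Injective ι :=
    (algebraMap ℚ⟮r⟯ ℂ).injective.comp RingOfIntegers.coe_injective
  have hint : ∀ z : 𝓞 ℚ⟮r⟯, IsIntegral ℤ (ι z) := fun z =>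
    (RingOfIntegers.isIntegral_coe z).map ((algebraMap ℚ⟮r⟯ ℂ).toIntAlgHom)
  have hz : ∀ z : 𝓞 ℚ⟮r⟯, ∃ (a b : ℚ) (s V : ℤ), ι z = a + b * δ ∧ 2 * a = s ∧
      a ^ 2 + b ^ 2 * E = V := by
    intro z
    obtain ⟨a, b, hab⟩ := hrep (ι z) (SetLike.coe_mem ((algebraMap (𝓞 ℚ⟮r⟯) ℚ⟮r⟯) z))
    have hc : (starRingEnd ℂ) (ι z) = a - b * δ := by
      rw [hab]; simp [hconj]; ring
    have hi : IsIntegral ℤ ((starRingEnd ℂ) (ι z)) :=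
      (hint z).map ((starRingEnd ℂ).toIntAlgHom)
    obtain ⟨s, hs⟩ := int_of_rat (2 * a) _ ((hint z).add hi) (by rw [hc, hab]; push_cast; ring)
    obtain ⟨V, hV⟩ := int_of_rat (a ^ 2 + b ^ 2 * E) _ ((hint z).mul hi) (by
      rw [hc, hab]; push_cast; linear_combination (-b ^ 2 : ℂ) * hδE)
    exact ⟨a, b, s, V, hab, hs, hV⟩
  have hnorm : ∀ (z : 𝓞 ℚ⟮r⟯) (a b : ℚ), ι z = a + b * δ →
      ι z * (starRingEnd ℂ) (ι z) = ((a ^ 2 + b ^ 2 * E : ℚ) : ℂ) := by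
    intro z a b hab
    rw [hab]; simp [hconj]; linear_combination (-b ^ 2 : ℂ) * hδE
  have hunit : ∀ u : (𝓞 ℚ⟮r⟯)ˣ, ι u = 1 ∨ ι u = -1 := by
    intro u
    obtain ⟨a, b, s, V, h1, h2, hV⟩ := hz u
    obtain ⟨a', b', s', V', h1', h2', hV'⟩ := hz (u⁻¹ : (𝓞 ℚ⟮r⟯)ˣ)
    have hEQ : (0 : ℚ) < E := by exact_mod_cast hE
    have hV0 : 0 ≤ V := by
      have : (0 : ℚ) ≤ V := by rw [← hV]; positivity
      exact_mod_cast this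
    have hVV : V * V' = 1 := by
      have e1 := hnorm _ _ _ h1
      have e2 := hnorm _ _ _ h1'
      rw [hV] at e1
      rw [hV'] at e2
      have e3 : ι u * ι (u⁻¹ : (𝓞 ℚ⟮r⟯)ˣ) = 1 := by rw [← map_mul]; simp
      have e4 : ((V : ℂ) * V') = 1 := by
        have : ((V : ℂ) * V') = (ι u * ι (u⁻¹ : (𝓞 ℚ⟮r⟯)ˣ)) *
          (starRingEnd ℂ) (ι u * ι (u⁻¹ : (𝓞 ℚ⟮r⟯)ˣ)) := by
          rw [map_mul]
          push_cast at e1 e2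
          rw [← e1, ← e2]; ring
        rw [this, e3]; simp
      exact_mod_cast e4
    have hV1 : V = 1 := by
      rcases Int.isUnit_iff.1 (IsUnit.of_mul_eq_one _ hVV) with h | h
      · exact h
      · omega
    subst hV1
    have hb : b = 0 := by
      apply rat_unit E s b hE4 h3 hE
      rw [← h2]; push_cast at hV; linear_combination 4 * hV
    subst hb
    have ha : a = 1 ∨ a = -1 := by
      have h4 : a * a = 1 := by rw [← pow_two]; simpa using hV
      exact mul_self_eq_one_iff.1 h4
    rcases ha with rfl | rfl
    · left; simpa using h1
    · right; simpa using h1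
  -- the special elements
  have hintα : ∀ e : ℂ, e ^ 2 = δ ^ 2 → IsIntegral ℤ ((1 + e) / 2) := by
    intro e he
    refine ⟨Polynomial.X ^ 2 - Polynomial.X + Polynomial.C ((U : ℤ) ^ n), ?_, ?_⟩
    · monicity!
    · rw [Polynomial.eval₂_add, Polynomial.eval₂_sub, Polynomial.eval₂_X_pow, Polynomial.eval₂_C,
        Polynomial.eval₂_X]
      push_cast [eq_intCast]
      linear_combination (1 / 4 : ℂ) * he + (1 / 4 : ℂ) * hδ
  have hmk : ∀ z : ℂ, z ∈ ℚ⟮r⟯ → IsIntegral ℤ z → ∃ w : 𝓞 ℚ⟮r⟯, ι w = z := by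
    intro z hz hi
    have : IsIntegral ℤ (⟨z, hz⟩ : ℚ⟮r⟯) := by
      rw [← isIntegral_algebraMap_iff (B := ℂ) (algebraMap ℚ⟮r⟯ ℂ).injective]
      exact hi
    exact ⟨⟨⟨z, hz⟩, this⟩, rfl⟩
  have h1K : (1 : ℂ) ∈ ℚ⟮r⟯ := one_mem _
  have h2K : (2 : ℂ) ∈ ℚ⟮r⟯ := ofNat_mem _ 2
  obtain ⟨α, hα⟩ := hmk ((1 + δ) / 2) (div_mem (add_mem h1K hδK) h2K) (hintα δ rfl)
  obtain ⟨α', hα'⟩ := hmk ((1 + -δ) / 2) (div_mem (add_mem h1K (neg_mem hδK)) h2K)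
    (hintα (-δ) (by ring))
  have hprod : ι α * ι α' = (U : ℂ) ^ n := by
    rw [hα, hα']; linear_combination (-1 / 4 : ℂ) * hδ
  have hcα : (starRingEnd ℂ) (ι α) = ι α' := by
    rw [hα, hα', map_div₀, map_add, map_one, hconj, map_ofNat]
  apply ideal_part α α' (U : 𝓞 ℚ⟮r⟯) n (by omega)
  · apply hιinj
    rw [map_mul, hprod]; simp
  · apply hιinj
    rw [map_add, hα, hα', map_one]; ring
  · rintro rfl
    rw [map_zero, zero_mul] at hprod
    have : (U : ℂ) ≠ 0 := by
      have : U ≠ 0 := by omega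
      exact_mod_cast this
    exact pow_ne_zero n this hprod.symm
  intro l m β u hlm hαβ
  have hmodd : Odd m := (Nat.odd_mul.1 (hlm ▸ hno)).2
  obtain ⟨a, b, s, V, hab, hs, hV⟩ := hz β
  have hNβ := hnorm _ _ _ hab
  rw [hV] at hNβ
  have hαι : ι α = ι u * ι β ^ m := by rw [hαβ]; simp
  have huu : ι u * (starRingEnd ℂ) (ι u) = 1 := by
    rcases hunit u with h | h <;> rw [h] <;> simp
  have hVm : V ^ m = (U : ℤ) ^ n := by
    have : (V : ℂ) ^ m = (U : ℂ) ^ n := by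
      rw [← hprod, ← hcα, hαι, map_mul, map_pow]
      push_cast at hNβ
      rw [← hNβ]
      linear_combination (-(ι β * (starRingEnd ℂ) (ι β)) ^ m) * huu
    exact_mod_cast this
  have hV0 : 0 ≤ V := by
    have hEQ : (0 : ℚ) < E := by exact_mod_cast hE
    have : (0 : ℚ) ≤ V := by rw [← hV]; positivity
    exact_mod_cast this
  have hm0 : m ≠ 0 := by rintro rfl; omega
  have hl0 : l ≠ 0 := by rintro rfl; omega
  have hVU : V = (U : ℤ) ^ l := by
    rw [hlm, pow_mul] at hVm
    exact (pow_left_inj₀ hV0 (by positivity) hm0).1 hVm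
  have hVge : (U : ℤ) ≤ V := by
    rw [hVU]
    exact le_self_pow₀ (by omega) hl0
  have hsum : ι β + (starRingEnd ℂ) (ι β) = s := by
    have : ((2 * a : ℚ) : ℂ) = s := by rw [hs]; simp
    rw [← this, hab]; simp [hconj]; ring
  have hT := (lucT_eq s V _ _ hsum (by simpa using hNβ) m).1
  by_contra hm1
  have hdvd : V ∣ m := by
    apply lucT_main s V m hmodd hm1 (by omega)
    have htr : ι α + (starRingEnd ℂ) (ι α) = 1 := by rw [hcα, hα, hα']; ring
    rw [hαι, map_mul, map_pow] at htr
    rcases hunit u with h | h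
    · left
      rw [h] at htr
      have : (lucT s V m : ℂ) = 1 := by rw [hT]; simpa using htr
      exact_mod_cast this
    · right
      rw [h] at htr
      have : (lucT s V m : ℂ) = -1 := by
        rw [hT]; simp at htr; linear_combination -htr
      exact_mod_cast this
  have h5 : V ≤ m := Int.le_of_dvd (by omega) hdvd
  have h6 : m ≤ n := Nat.le_of_dvd (by omega) ⟨l, by rw [hlm, mul_comm]⟩
  omega

theorem stmt_14 (n : ℕ) (hn : 3 ≤ n) (hno : Odd n) :
    {d : ℤ | d < 0 ∧ d + 1 < 0 ∧
      n ∣ quadClassNumber d ∧ n ∣ quadClassNumber (d + 1)}.Infinite := by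
  have hn0 : n ≠ 0 := by omega
  let W : ℕ → ℕ := fun t => 4 * (3 * (n + 1 + t)) ^ n - 1
  let f : ℕ → ℤ := fun t => -4 * (W t : ℤ) ^ n
  have hk : ∀ t, 3 * (n + 1 + t) ≤ (3 * (n + 1 + t)) ^ n := fun t => Nat.le_self_pow hn0 _
  have hWmono : StrictMono W := by
    intro a b hab
    have : (3 * (n + 1 + a)) ^ n < (3 * (n + 1 + b)) ^ n := Nat.pow_lt_pow_left (by omega) hn0
    have := hk a
    simp only [W]
    omega
  have hf : Function.Injective f := by
    intro a b hab
    have h1 : (W a : ℤ) ^ n = (W b : ℤ) ^ n := by simp only [f] at hab; linarith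
    have h2 : W a ^ n = W b ^ n := by exact_mod_cast h1
    exact hWmono.injective (Nat.pow_left_injective hn0 h2)
  apply (Set.infinite_range_of_injective hf).mono
  rintro _ ⟨t, rfl⟩
  have hkt := hk t
  have hWcast : (W t : ℤ) = 4 * ((3 * (n + 1 + t) : ℕ) : ℤ) ^ n - 1 := by
    simp only [W]
    rw [Nat.cast_sub (by omega)]
    push_cast; ring
  have hWn : n < W t := by simp only [W]; omega
  have hWp : (0 : ℤ) < (W t : ℤ) ^ n := by
    have : 0 < W t := by omega
    positivity
  have h3k : (3 : ℤ) ∣ ((3 * (n + 1 + t) : ℕ) : ℤ) ^ n :=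
    dvd_pow (by push_cast; exact dvd_mul_right _ _) hn0
  refine ⟨?_, ?_, ?_, ?_⟩
  · simp only [f]; omega
  · simp only [f]; omega
  · obtain ⟨j, hj⟩ := hno
    refine main_div n (3 * (n + 1 + t)) (2 * (W t : ℤ) ^ j) _ hn ⟨j, hj⟩ (by omega) ?_ ?_ ?_
    · have : (W t : ℤ) ≠ 0 := by omega
      positivity
    · have : (1 - 4 * ((3 * (n + 1 + t) : ℕ) : ℤ) ^ n) = - (W t : ℤ) := by rw [hWcast]; ring
      rw [this]
      simp only [f]
      conv_lhs => rw [hj]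
      ring
    · omega
  · refine main_div n (W t) 1 _ hn hno hWn one_ne_zero ?_ ?_
    · simp only [f]; ring
    · have h1 : (W t : ℤ) ≡ -1 [ZMOD 3] := by
        rw [hWcast]
        exact (Int.modEq_iff_dvd.2 (by omega))
      have h2 := h1.pow n
      rw [hno.neg_one_pow] at h2
      have h4 := Int.modEq_iff_dvd.1 h2
      omega
end
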